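/- Under Assumption 1, let i ∈ [m], let A(i) be the causal Markov boundary of X_i, and let B, W ⊆ [m]∖{i} with A(i) ⊆ B. Then: (i) the causal Markov chain X_W → X_B → X_i holds, i.e. I(X_W → X_i ‖ X_B) = 0; (ii) I(X_W → X_i) ≤ I(X_B → X_i); and (iii) equality holds in (ii) if and only if A(i) ⊆ W. -/

import Mathlib

open Finset

/-- Probability of an event under the probability mass function `p` on a finite space. -/
noncomputable def pr {Ω : Type} [Fintype Ω] (p : Ω → ℝ) (E : Set Ω) : ℝ :=
  ∑ ω : Ω, E.indicator p ω

/-- Shannon conditional mutual information `I(A ; B | C)` of finite-valued random variables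
on a finite probability space with pmf `p` (terms with vanishing probability contribute `0`,
by the conventions `Real.log 0 = 0`, `x / 0 = 0`). -/
noncomputable def cmi {Ω α β γ : Type} [Fintype Ω] [Fintype α] [Fintype β] [Fintype γ]
    (p : Ω → ℝ) (A : Ω → α) (B : Ω → β) (C : Ω → γ) : ℝ :=
  ∑ a : α, ∑ b : β, ∑ c : γ,
    pr p {ω | A ω = a ∧ B ω = b ∧ C ω = c} *
      Real.log (pr p {ω | A ω = a ∧ B ω = b ∧ C ω = c} * pr p {ω | C ω = c} /
        (pr p {ω | A ω = a ∧ C ω = c} * pr p {ω | B ω = b ∧ C ω = c}))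

/-- `A` and `B` are conditionally independent given `C` (under the pmf `p`). -/
def CondIndep {Ω α β γ : Type} [Fintype Ω] (p : Ω → ℝ)
    (A : Ω → α) (B : Ω → β) (C : Ω → γ) : Prop :=
  ∀ (a : α) (b : β) (c : γ),
    pr p {ω | A ω = a ∧ B ω = b ∧ C ω = c} * pr p {ω | C ω = c}
      = pr p {ω | A ω = a ∧ C ω = c} * pr p {ω | B ω = b ∧ C ω = c}

/-- Trajectories of `m` processes over `n` time steps with alphabet `𝒳`:
`ω i j` is the value of process `i` at (0-indexed) time `j`. -/
abbrev Traj (m n : ℕ) (𝒳 : Type) := Fin m → Fin n → 𝒳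

/-- The past `X_S^{j-1}`: the values of the processes in `S` at times strictly before `j`;
all other entries are masked by `none`. -/
def past {m n : ℕ} {𝒳 : Type} (S : Finset (Fin m)) (j : Fin n) (ω : Traj m n 𝒳) :
    Fin m → Fin n → Option 𝒳 :=
  fun k t => if k ∈ S ∧ t < j then some (ω k t) else none

/-- Causally conditioned directed information
`I(X_S → X_i ‖ X_T) := Σ_{j=1}^{n} I(X_S^{j-1} ; X_{i,j} | X_i^{j-1}, X_T^{j-1})`. -/
noncomputable def di {m n : ℕ} {𝒳 : Type} [Fintype 𝒳] [DecidableEq 𝒳]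
    (p : Traj m n 𝒳 → ℝ) (S : Finset (Fin m)) (i : Fin m) (T : Finset (Fin m)) : ℝ :=
  ∑ j : Fin n,
    cmi p (past S j) (fun ω => ω i j) (fun ω => (past {i} j ω, past T j ω))

/-- Assumption 1: the joint distribution is strictly positive (and is a pmf), and at each
time `j` the variables `X_{1,j}, …, X_{m,j}` are mutually conditionally independent given
the full past `X_{[m]}^{j-1}` (stated in the division-free form
`P(joint ∧ past) · P(past)^{m-1} = Π_i P(X_{i,j} = x_i ∧ past)`). -/
def Assumption1 {m n : ℕ} {𝒳 : Type} [Fintype 𝒳] [DecidableEq 𝒳]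
    (p : Traj m n 𝒳 → ℝ) : Prop :=
  (∀ ω, 0 < p ω) ∧ (∑ ω : Traj m n 𝒳, p ω = 1) ∧
    ∀ (j : Fin n) (x : Fin m → 𝒳) (h : Fin m → Fin n → Option 𝒳),
      pr p {ω | (∀ i, ω i j = x i) ∧ past Finset.univ j ω = h} *
          pr p {ω | past Finset.univ j ω = h} ^ (m - 1)
        = ∏ i : Fin m, pr p {ω | ω i j = x i ∧ past Finset.univ j ω = h}

/-- `S ⊆ [m]∖{i}` is a causal Markov blanket of `X_i` if
`I(X_{[m]∖({i}∪S)} → X_i ‖ X_S) = 0`. -/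
def IsCausalBlanket {m n : ℕ} {𝒳 : Type} [Fintype 𝒳] [DecidableEq 𝒳]
    (p : Traj m n 𝒳 → ℝ) (i : Fin m) (S : Finset (Fin m)) : Prop :=
  S ⊆ Finset.univ.erase i ∧ di p (Finset.univ.erase i \ S) i S = 0

/-- A causal Markov boundary `A(i)` of `X_i` is a causal Markov blanket of minimum
cardinality. -/
def IsCausalBoundary {m n : ℕ} {𝒳 : Type} [Fintype 𝒳] [DecidableEq 𝒳]
    (p : Traj m n 𝒳 → ℝ) (i : Fin m) (A : Finset (Fin m)) : Prop :=
  IsCausalBlanket p i A ∧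
    ∀ B : Finset (Fin m), IsCausalBlanket p i B → A.card ≤ B.card

/-!
By the chain rule `I(X_S → X_i ‖ X_T) = H(X_i ‖ X_T) - H(X_i ‖ X_{S ∪ T})`, where the causally
conditioned entropy `H(X_i ‖ X_S)` decreases in `S`. Hence the blankets of `X_i` are the sets `S`
at which `H(X_i ‖ X_S)` takes its least value `H(X_i ‖ X_{[m]})`, and all three claims follow from
the fact that these minimizers are exactly the supersets of `A(i)`. Supersets are minimizers by
monotonicity. For the converse, the minimizers are closed under intersection: given two
trajectories that agree on `S ∩ T`, a third one, which has positive probability, agrees with the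
first on `S` and with the second on `T`, so a conditional law of the present that depends only on
`X_S`, and also only on `X_T`, depends only on `X_{S ∩ T}`. The boundary has minimum cardinality,
so intersecting it with a minimizer cannot shrink it.
-/

section Gibbs

open InformationTheory

variable {ι : Type*} {s : Finset ι} {P Q : ι → ℝ}

lemma sum_mul_log_div_eq_sum_mul_klFun_add (hPQ : ∀ x ∈ s, Q x = 0 → P x = 0) :
    ∑ x ∈ s, P x * Real.log (P x / Q x) =
      ∑ x ∈ s, Q x * klFun (P x / Q x) + (∑ x ∈ s, P x - ∑ x ∈ s, Q x) := by
  rw [← Finset.sum_sub_distrib, ← Finset.sum_add_distrib]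
  refine Finset.sum_congr rfl fun x hx => ?_
  by_cases hQ : Q x = 0
  · simp [hQ, hPQ x hx hQ]
  · rw [klFun_apply]
    field_simp
    ring

lemma mul_klFun_div_nonneg {a b : ℝ} (ha : 0 ≤ a) (hb : 0 ≤ b) : 0 ≤ b * klFun (a / b) :=
  mul_nonneg hb (klFun_nonneg (div_nonneg ha hb))

lemma sum_mul_log_div_nonneg (hP : ∀ x ∈ s, 0 ≤ P x) (hQ : ∀ x ∈ s, 0 ≤ Q x)
    (hPQ : ∀ x ∈ s, Q x = 0 → P x = 0) (hsum : ∑ x ∈ s, Q x ≤ ∑ x ∈ s, P x) :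
    0 ≤ ∑ x ∈ s, P x * Real.log (P x / Q x) := by
  rw [sum_mul_log_div_eq_sum_mul_klFun_add hPQ]
  exact add_nonneg (Finset.sum_nonneg fun x hx => mul_klFun_div_nonneg (hP x hx) (hQ x hx))
    (sub_nonneg.2 hsum)

lemma eq_of_sum_mul_log_div_eq_zero (hP : ∀ x ∈ s, 0 ≤ P x) (hQ : ∀ x ∈ s, 0 ≤ Q x)
    (hPQ : ∀ x ∈ s, Q x = 0 → P x = 0) (hsum : ∑ x ∈ s, Q x ≤ ∑ x ∈ s, P x)
    (h : ∑ x ∈ s, P x * Real.log (P x / Q x) = 0) : ∀ x ∈ s, P x = Q x := by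
  intro x hx
  have hterm : ∀ x ∈ s, 0 ≤ Q x * klFun (P x / Q x) := fun x hx =>
    mul_klFun_div_nonneg (hP x hx) (hQ x hx)
  rw [sum_mul_log_div_eq_sum_mul_klFun_add hPQ,
    add_eq_zero_iff_of_nonneg (Finset.sum_nonneg hterm) (sub_nonneg.2 hsum),
    Finset.sum_eq_zero_iff_of_nonneg hterm] at h
  rcases mul_eq_zero.1 (h.1 x hx) with hQx | hkl
  · rw [hQx, hPQ x hx hQx]
  · exact eq_of_div_eq_one ((klFun_eq_zero_iff (div_nonneg (hP x hx) (hQ x hx))).1 hkl)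

end Gibbs

section FiniteProbability

variable {Ω α β γ δ ε υ : Type} [Fintype Ω] {p : Ω → ℝ}

lemma pr_nonneg (hp : ∀ ω, 0 ≤ p ω) (E : Set Ω) : 0 ≤ pr p E :=
  Finset.sum_nonneg fun ω _ => Set.indicator_nonneg (fun x _ => hp x) ω

lemma pr_mono (hp : ∀ ω, 0 ≤ p ω) {E F : Set Ω} (hEF : E ⊆ F) : pr p E ≤ pr p F :=
  Finset.sum_le_sum fun ω _ => Set.indicator_le_indicator_of_subset hEF hp ω

lemma pr_eq_zero_of_subset (hp : ∀ ω, 0 ≤ p ω) {E F : Set Ω} (hEF : E ⊆ F) (hF : pr p F = 0) :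
    pr p E = 0 :=
  ((pr_mono hp hEF).trans_eq hF).antisymm (pr_nonneg hp E)

lemma pr_pos_of_mem (hp : ∀ ω, 0 ≤ p ω) {E : Set Ω} {ω : Ω} (hE : ω ∈ E) (hω : 0 < p ω) :
    0 < pr p E :=
  Finset.sum_pos' (fun ω _ => Set.indicator_nonneg (fun x _ => hp x) ω)
    ⟨ω, Finset.mem_univ ω, (Set.indicator_of_mem hE p).symm ▸ hω⟩

lemma sum_pr_eq_and [Fintype α] (p : Ω → ℝ) (A : Ω → α) (R : Ω → Prop) :
    ∑ a, pr p {ω | A ω = a ∧ R ω} = pr p {ω | R ω} := by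
  classical
  simp only [pr]
  rw [Finset.sum_comm]
  refine Finset.sum_congr rfl fun ω _ => ?_
  by_cases h : R ω <;> simp [Set.indicator_apply, h]

lemma sum_pr_eq_mul [Fintype α] (p : Ω → ℝ) (A : Ω → α) (f : α → ℝ) :
    ∑ a, pr p {ω | A ω = a} * f a = ∑ ω, p ω * f (A ω) := by
  classical
  simp only [pr, Finset.sum_mul]
  rw [Finset.sum_comm]
  refine Finset.sum_congr rfl fun ω _ => ?_
  simp [Set.indicator_apply]

lemma sum_pr_eq [Fintype α] (p : Ω → ℝ) (A : Ω → α) :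
    ∑ a, pr p {ω | A ω = a} = ∑ ω, p ω := by
  simpa only [mul_one] using sum_pr_eq_mul p A fun _ => 1

section MutualInformation

/-- The law of `(A, B, C)`, as a mass function on triples. -/
noncomputable def jointLaw (p : Ω → ℝ) (A : Ω → α) (B : Ω → β) (C : Ω → γ) (x : α × β × γ) : ℝ :=
  pr p {ω | A ω = x.1 ∧ B ω = x.2.1 ∧ C ω = x.2.2}

/-- The law on triples that has the same `(A, C)` and `(B, C)` marginals as `(A, B, C)` and makes
the first two coordinates conditionally independent given the third; it is `0` where `C` has
probability `0`, since division by zero gives `0`. -/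
noncomputable def condProdLaw (p : Ω → ℝ) (A : Ω → α) (B : Ω → β) (C : Ω → γ)
    (x : α × β × γ) : ℝ :=
  pr p {ω | A ω = x.1 ∧ C ω = x.2.2} * pr p {ω | B ω = x.2.1 ∧ C ω = x.2.2} /
    pr p {ω | C ω = x.2.2}

variable {A : Ω → α} {B : Ω → β} {C : Ω → γ}

lemma condProdLaw_nonneg (hp : ∀ ω, 0 ≤ p ω) (x : α × β × γ) : 0 ≤ condProdLaw p A B C x :=
  div_nonneg (mul_nonneg (pr_nonneg hp _) (pr_nonneg hp _)) (pr_nonneg hp _)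

lemma jointLaw_eq_zero_of_condProdLaw_eq_zero (hp : ∀ ω, 0 ≤ p ω) (x : α × β × γ)
    (hx : condProdLaw p A B C x = 0) : jointLaw p A B C x = 0 := by
  simp only [condProdLaw, div_eq_zero_iff, mul_eq_zero] at hx
  rcases hx with (hAC | hBC) | hC
  · exact pr_eq_zero_of_subset hp (fun _ hω => And.intro hω.1 hω.2.2) hAC
  · exact pr_eq_zero_of_subset hp (fun _ hω => hω.2) hBC
  · exact pr_eq_zero_of_subset hp (fun _ hω => hω.2.2) hC

lemma condIndep_of_jointLaw_eq_condProdLaw (hp : ∀ ω, 0 ≤ p ω)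
    (h : ∀ x, jointLaw p A B C x = condProdLaw p A B C x) : CondIndep p A B C := by
  intro a b c
  have habc := h (a, b, c)
  simp only [jointLaw, condProdLaw] at habc
  by_cases hc : pr p {ω | C ω = c} = 0
  · rw [hc, mul_zero, pr_eq_zero_of_subset hp (fun ω hω => hω.2) hc, zero_mul]
  · rw [habc, div_mul_cancel₀ _ hc]

variable [Fintype α] [Fintype β] [Fintype γ]

lemma sum_jointLaw_mul (p : Ω → ℝ) (A : Ω → α) (B : Ω → β) (C : Ω → γ) (f : α × β × γ → ℝ) :
    ∑ x, jointLaw p A B C x * f x = ∑ ω, p ω * f (A ω, B ω, C ω) := by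
  simpa only [jointLaw, Prod.ext_iff] using sum_pr_eq_mul p (fun ω => (A ω, B ω, C ω)) f

lemma sum_jointLaw (p : Ω → ℝ) (A : Ω → α) (B : Ω → β) (C : Ω → γ) :
    ∑ x, jointLaw p A B C x = ∑ ω, p ω := by
  simpa only [mul_one] using sum_jointLaw_mul p A B C fun _ => 1

lemma sum_condProdLaw (p : Ω → ℝ) (A : Ω → α) (B : Ω → β) (C : Ω → γ) :
    ∑ x, condProdLaw p A B C x = ∑ ω, p ω := by
  calc ∑ x, condProdLaw p A B C x
      = ∑ c, ∑ a, ∑ b, condProdLaw p A B C (a, b, c) := by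
        simp only [Fintype.sum_prod_type]
        rw [Finset.sum_comm (s := (Finset.univ : Finset γ))]
        exact Finset.sum_congr rfl fun a _ => Finset.sum_comm
    _ = ∑ c, (∑ a, pr p {ω | A ω = a ∧ C ω = c}) * (∑ b, pr p {ω | B ω = b ∧ C ω = c}) /
          pr p {ω | C ω = c} := by
        simp only [condProdLaw, Finset.sum_mul_sum, Finset.sum_div]
    _ = ∑ c, pr p {ω | C ω = c} :=
        Finset.sum_congr rfl fun c _ => by
          rw [sum_pr_eq_and p A (C · = c), sum_pr_eq_and p B (C · = c), mul_self_div_self]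
    _ = ∑ ω, p ω := sum_pr_eq p C

lemma cmi_eq_sum_jointLaw_mul_log (p : Ω → ℝ) (A : Ω → α) (B : Ω → β) (C : Ω → γ) :
    cmi p A B C =
      ∑ x, jointLaw p A B C x * Real.log (jointLaw p A B C x / condProdLaw p A B C x) := by
  simp only [cmi, Fintype.sum_prod_type, jointLaw, condProdLaw, div_div_eq_mul_div]

lemma cmi_nonneg (hp : ∀ ω, 0 ≤ p ω) : 0 ≤ cmi p A B C := by
  rw [cmi_eq_sum_jointLaw_mul_log]
  exact sum_mul_log_div_nonneg (fun _ _ => pr_nonneg hp _) (fun x _ => condProdLaw_nonneg hp x)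
    (fun x _ => jointLaw_eq_zero_of_condProdLaw_eq_zero hp x)
    ((sum_condProdLaw p A B C).trans (sum_jointLaw p A B C).symm).le

lemma condIndep_of_cmi_eq_zero (hp : ∀ ω, 0 ≤ p ω) (h : cmi p A B C = 0) :
    CondIndep p A B C := by
  rw [cmi_eq_sum_jointLaw_mul_log] at h
  refine condIndep_of_jointLaw_eq_condProdLaw hp fun x => ?_
  exact eq_of_sum_mul_log_div_eq_zero (fun _ _ => pr_nonneg hp _)
    (fun x _ => condProdLaw_nonneg hp x)
    (fun x _ => jointLaw_eq_zero_of_condProdLaw_eq_zero hp x)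
    ((sum_condProdLaw p A B C).trans (sum_jointLaw p A B C).symm).le h x (Finset.mem_univ x)

end MutualInformation

section ConditionalEntropy

/-- The conditional probability that `B = b` given that `C` takes its value at `ω`. Conditioning
on a sample point rather than on a value of `C` lets conditional laws given different variables be
compared as functions on the same space. -/
noncomputable def condProb (p : Ω → ℝ) (B : Ω → β) (C : Ω → γ) (b : β) (ω : Ω) : ℝ :=
  pr p {ω' | B ω' = b ∧ C ω' = C ω} / pr p {ω' | C ω' = C ω}

/-- The Shannon conditional entropy `H(B | C)`, as an expectation over sample points. -/
noncomputable def condEntropy (p : Ω → ℝ) (B : Ω → β) (C : Ω → γ) : ℝ :=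
  -∑ ω, p ω * Real.log (condProb p B C (B ω) ω)

variable {B : Ω → β} {C : Ω → γ} {D : Ω → δ}

lemma condProb_pos (hp : ∀ ω, 0 ≤ p ω) {ω : Ω} (hω : 0 < p ω) : 0 < condProb p B C (B ω) ω :=
  div_pos (pr_pos_of_mem hp (ω := ω) ⟨rfl, rfl⟩ hω) (pr_pos_of_mem hp (ω := ω) rfl hω)

lemma condProb_mul_pr (hp : ∀ ω, 0 ≤ p ω) (b : β) (ω : Ω) :
    condProb p B C b ω * pr p {ω' | C ω' = C ω} = pr p {ω' | B ω' = b ∧ C ω' = C ω} :=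
  div_mul_cancel_of_imp (pr_eq_zero_of_subset hp fun _ hω => hω.2)

lemma condProb_eq_of_eq {b : β} {ω ω' : Ω} (h : C ω = C ω') :
    condProb p B C b ω = condProb p B C b ω' := by
  rw [condProb, condProb, h]

lemma condEntropy_congr (h : ∀ ω ω', C ω = C ω' ↔ D ω = D ω') :
    condEntropy p B C = condEntropy p B D := by
  simp only [condEntropy, condProb, h]

lemma condEntropy_eq_of_condProb_eq (h : ∀ b ω, condProb p B C b ω = condProb p B D b ω) :
    condEntropy p B C = condEntropy p B D := by
  simp only [condEntropy, h]

lemma cmi_eq_condEntropy_sub [Fintype α] [Fintype β] [Fintype γ] (hp : ∀ ω, 0 ≤ p ω) (A : Ω → α)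
    (B : Ω → β) (C : Ω → γ) :
    cmi p A B C = condEntropy p B C - condEntropy p B fun ω => (A ω, C ω) := by
  rw [cmi_eq_sum_jointLaw_mul_log, sum_jointLaw_mul p A B C
    fun x => Real.log (jointLaw p A B C x / condProdLaw p A B C x), condEntropy, condEntropy,
    neg_sub_neg, ← Finset.sum_sub_distrib]
  refine Finset.sum_congr rfl fun ω _ => ?_
  rcases (hp ω).eq_or_lt with hω | hω
  · simp only [← hω, zero_mul, sub_self]
  rw [← mul_sub, ← Real.log_div (condProb_pos hp hω).ne' (condProb_pos hp hω).ne']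
  simp only [jointLaw, condProdLaw, condProb, Prod.mk.injEq, and_left_comm (a := B _ = _)]
  rw [div_div_div_eq, div_div_eq_mul_div]

lemma cmi_eq_condEntropy_sub_of_factorsThrough [Fintype β] [Fintype γ] [Fintype δ]
    (hp : ∀ ω, 0 ≤ p ω) (hCD : C.FactorsThrough D) :
    cmi p D B C = condEntropy p B C - condEntropy p B D := by
  rw [cmi_eq_condEntropy_sub hp, condEntropy_congr (C := fun ω => (D ω, C ω)) (D := D)]
  exact fun ω ω' => Prod.mk_inj.trans (and_iff_left_of_imp fun h => hCD h)

lemma condEntropy_le_of_factorsThrough [Finite β] [Finite γ] [Finite δ]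
    (hp : ∀ ω, 0 ≤ p ω) (hCD : C.FactorsThrough D) : condEntropy p B D ≤ condEntropy p B C := by
  have := Fintype.ofFinite β
  have := Fintype.ofFinite γ
  have := Fintype.ofFinite δ
  rw [← sub_nonneg, ← cmi_eq_condEntropy_sub_of_factorsThrough hp hCD]
  exact cmi_nonneg hp

lemma CondIndep.condProb_eq (hp : ∀ ω, 0 < p ω) (hCD : C.FactorsThrough D)
    (h : CondIndep p D B C) (b : β) (ω : Ω) : condProb p B C b ω = condProb p B D b ω := by
  have hcell : ∀ ω', D ω' = D ω ∧ C ω' = C ω ↔ D ω' = D ω :=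
    fun ω' => and_iff_left_of_imp fun h => hCD h
  have hprod := h (D ω) b (C ω)
  simp only [and_left_comm (a := D _ = _), hcell] at hprod
  have hC := pr_pos_of_mem (E := {ω' | C ω' = C ω}) (fun ω => (hp ω).le) rfl (hp ω)
  have hD := pr_pos_of_mem (E := {ω' | D ω' = D ω}) (fun ω => (hp ω).le) rfl (hp ω)
  rw [condProb, condProb, div_eq_div_iff hC.ne' hD.ne', hprod, mul_comm]

lemma condProb_eq_of_condEntropy_eq [Finite β] [Finite γ] [Finite δ] (hp : ∀ ω, 0 < p ω)
    (hCD : C.FactorsThrough D) (h : condEntropy p B C = condEntropy p B D) (b : β) (ω : Ω) :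
    condProb p B C b ω = condProb p B D b ω := by
  have hp' : ∀ ω, 0 ≤ p ω := fun ω => (hp ω).le
  have := Fintype.ofFinite β
  have := Fintype.ofFinite γ
  have := Fintype.ofFinite δ
  refine (condIndep_of_cmi_eq_zero hp' ?_).condProb_eq hp hCD b ω
  rw [cmi_eq_condEntropy_sub_of_factorsThrough hp' hCD, h, sub_self]

lemma condProb_eq_of_forall_condProb_eq [Finite δ] (hp : ∀ ω, 0 < p ω)
    (hCD : C.FactorsThrough D) {b : β} {ω : Ω} {q : ℝ}
    (hq : ∀ ω', C ω' = C ω → condProb p B D b ω' = q) : condProb p B C b ω = q := by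
  have hp' : ∀ ω, 0 ≤ p ω := fun ω => (hp ω).le
  have := Fintype.ofFinite δ
  have hfibre : ∀ d, pr p {ω' | D ω' = d ∧ B ω' = b ∧ C ω' = C ω} =
      q * pr p {ω' | D ω' = d ∧ C ω' = C ω} := by
    intro d
    by_cases hd : ∃ ω₀, D ω₀ = d ∧ C ω₀ = C ω
    · obtain ⟨ω₀, rfl, hω₀⟩ := hd
      have hcell : ∀ ω', D ω' = D ω₀ ∧ C ω' = C ω ↔ D ω' = D ω₀ :=
        fun ω' => and_iff_left_of_imp fun h => (hCD h).trans hω₀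
      simp only [and_left_comm (a := D _ = _), hcell]
      rw [← hq ω₀ hω₀, condProb_mul_pr hp']
    · have hempty : {ω' | D ω' = d ∧ C ω' = C ω} = ∅ :=
        Set.eq_empty_of_forall_notMem fun ω' hω' => hd ⟨ω', hω'⟩
      have hzero : pr p {ω' | D ω' = d ∧ C ω' = C ω} = 0 := by simp [hempty, pr]
      rw [hzero, mul_zero, pr_eq_zero_of_subset hp' (fun _ h => And.intro h.1 h.2.2) hzero]
  have hC := pr_pos_of_mem (E := {ω' | C ω' = C ω}) hp' rfl (hp ω)
  rw [condProb, div_eq_iff hC.ne', ← sum_pr_eq_and p D (fun ω' => B ω' = b ∧ C ω' = C ω),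
    ← sum_pr_eq_and p D (C · = C ω), Finset.mul_sum]
  exact Finset.sum_congr rfl fun d _ => hfibre d

-- The intersection property of conditional independence, with `E` in the role of the information
-- common to `C` and `D`.
lemma condEntropy_eq_of_amalgamation [Finite β] [Finite γ] [Finite δ] [Finite υ]
    {E : Ω → ε} {U : Ω → υ} (hp : ∀ ω, 0 < p ω)
    (hCU : C.FactorsThrough U) (hDU : D.FactorsThrough U) (hEU : E.FactorsThrough U)
    (hE : ∀ ω ω', E ω = E ω' → ∃ ω₁, C ω₁ = C ω ∧ D ω₁ = D ω')
    (hC : condEntropy p B C = condEntropy p B U) (hD : condEntropy p B D = condEntropy p B U) :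
    condEntropy p B E = condEntropy p B U := by
  refine condEntropy_eq_of_condProb_eq fun b ω =>
    condProb_eq_of_forall_condProb_eq hp hEU fun ω' hω' => ?_
  have hCprob := condProb_eq_of_condEntropy_eq hp hCU hC b
  have hDprob := condProb_eq_of_condEntropy_eq hp hDU hD b
  obtain ⟨ω₁, hC₁, hD₁⟩ := hE ω' ω hω'
  calc condProb p B U b ω'
      = condProb p B C b ω' := (hCprob ω').symm
    _ = condProb p B C b ω₁ := (condProb_eq_of_eq hC₁).symm
    _ = condProb p B U b ω₁ := hCprob ω₁
    _ = condProb p B D b ω₁ := (hDprob ω₁).symm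
    _ = condProb p B D b ω := condProb_eq_of_eq hD₁
    _ = condProb p B U b ω := hDprob ω

end ConditionalEntropy

end FiniteProbability

section Past

variable {m n : ℕ} {𝒳 : Type} {S T : Finset (Fin m)} {j : Fin n} {ω ω' : Traj m n 𝒳}

lemma past_eq_past_iff : past S j ω = past S j ω' ↔ ∀ k ∈ S, ∀ t < j, ω k t = ω' k t := by
  refine ⟨fun h k hk t ht => by simpa [past, hk, ht] using congrFun₂ h k t,
    fun h => funext₂ fun k t => ?_⟩
  by_cases hkt : k ∈ S ∧ t < j
  · simp [past, hkt, h k hkt.1 t hkt.2]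
  · simp [past, hkt]

lemma past_union_eq_past_union_iff :
    past (S ∪ T) j ω = past (S ∪ T) j ω' ↔ past S j ω = past S j ω' ∧ past T j ω = past T j ω' := by
  simp only [past_eq_past_iff, Finset.mem_union, or_imp, forall_and]

lemma past_factorsThrough_past (hST : S ⊆ T) (j : Fin n) :
    (past (𝒳 := 𝒳) S j).FactorsThrough (past T j) := fun _ _ h =>
  past_eq_past_iff.2 fun k hk => past_eq_past_iff.1 h k (hST hk)

lemma exists_past_eq_and_past_eq_of_past_inter_eq
    (h : past (S ∩ T) j ω = past (S ∩ T) j ω') :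
    ∃ ω₁, past S j ω₁ = past S j ω ∧ past T j ω₁ = past T j ω' := by
  refine ⟨fun k => if k ∈ S then ω k else ω' k, past_eq_past_iff.2 fun k hk t _ => by simp [hk],
    past_eq_past_iff.2 fun k hkT t ht => ?_⟩
  by_cases hkS : k ∈ S
  · simpa [hkS] using past_eq_past_iff.1 h k (Finset.mem_inter.2 ⟨hkS, hkT⟩) t ht
  · simp [hkS]

end Past

section CausalEntropy

variable {m n : ℕ} {𝒳 : Type} [Fintype 𝒳] {p : Traj m n 𝒳 → ℝ} {i : Fin m}
  {A S T U : Finset (Fin m)}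

/-- The causally conditioned entropy
`H(X_i ‖ X_S) = Σ_{j=1}^{n} H(X_{i,j} | X_i^{j-1}, X_S^{j-1})`; the past of `X_i` is included by
inserting `i` into `S`. -/
noncomputable def causalEntropy (p : Traj m n 𝒳 → ℝ) (i : Fin m) (S : Finset (Fin m)) : ℝ :=
  ∑ j, condEntropy p (fun ω => ω i j) (past (insert i S) j)

lemma di_eq_causalEntropy_sub [DecidableEq 𝒳] (hp : ∀ ω, 0 ≤ p ω) (S : Finset (Fin m)) (i : Fin m)
    (T : Finset (Fin m)) : di p S i T = causalEntropy p i T - causalEntropy p i (S ∪ T) := by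
  rw [di, causalEntropy, causalEntropy, ← Finset.sum_sub_distrib]
  refine Finset.sum_congr rfl fun j _ => ?_
  rw [cmi_eq_condEntropy_sub hp]
  congr 1 <;> refine condEntropy_congr fun ω ω' => ?_
  · rw [Prod.mk_inj, Finset.insert_eq, past_union_eq_past_union_iff]
  · simp only [Prod.mk_inj, Finset.insert_eq, past_union_eq_past_union_iff]
    exact and_left_comm

lemma antitone_causalEntropy (hp : ∀ ω, 0 ≤ p ω) (i : Fin m) : Antitone (causalEntropy p i) :=
  fun _ _ hST => Finset.sum_le_sum fun j _ => condEntropy_le_of_factorsThrough hp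
    (past_factorsThrough_past (Finset.insert_subset_insert i hST) j)

lemma condEntropy_past_eq_of_causalEntropy_eq (hp : ∀ ω, 0 ≤ p ω) (hST : S ⊆ T)
    (h : causalEntropy p i S = causalEntropy p i T) (j : Fin n) :
    condEntropy p (fun ω => ω i j) (past (insert i S) j) =
      condEntropy p (fun ω => ω i j) (past (insert i T) j) :=
  ((Finset.sum_eq_sum_iff_of_le fun j _ => condEntropy_le_of_factorsThrough hp
    (past_factorsThrough_past (Finset.insert_subset_insert i hST) j)).1 h.symm j
      (Finset.mem_univ j)).symm

lemma causalEntropy_inter_eq (hp : ∀ ω, 0 < p ω) (hSU : S ⊆ U) (hTU : T ⊆ U)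
    (hS : causalEntropy p i S = causalEntropy p i U)
    (hT : causalEntropy p i T = causalEntropy p i U) :
    causalEntropy p i (S ∩ T) = causalEntropy p i U := by
  have hp' : ∀ ω, 0 ≤ p ω := fun ω => (hp ω).le
  have hfactors : ∀ {V}, V ⊆ U → ∀ j : Fin n,
      (past (𝒳 := 𝒳) (insert i V) j).FactorsThrough (past (insert i U) j) :=
    fun hVU => past_factorsThrough_past (Finset.insert_subset_insert i hVU)
  refine Finset.sum_congr rfl fun j _ => condEntropy_eq_of_amalgamation hp (hfactors hSU j)
    (hfactors hTU j) (hfactors (Finset.inter_subset_left.trans hSU) j) (fun ω ω' h => ?_)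
    (condEntropy_past_eq_of_causalEntropy_eq hp' hSU hS j)
    (condEntropy_past_eq_of_causalEntropy_eq hp' hTU hT j)
  rw [Finset.insert_inter_distrib] at h
  exact exists_past_eq_and_past_eq_of_past_inter_eq h

variable [DecidableEq 𝒳]

lemma isCausalBlanket_iff_causalEntropy_eq (hp : ∀ ω, 0 ≤ p ω) :
    IsCausalBlanket p i S ↔
      S ⊆ Finset.univ.erase i ∧ causalEntropy p i S = causalEntropy p i Finset.univ := by
  have herase : causalEntropy p i (Finset.univ.erase i) = causalEntropy p i Finset.univ := by
    simp only [causalEntropy, Finset.insert_erase (Finset.mem_univ i),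
      Finset.insert_eq_self.2 (Finset.mem_univ i)]
  refine and_congr_right fun hS => ?_
  rw [di_eq_causalEntropy_sub hp, Finset.sdiff_union_of_subset hS, sub_eq_zero, herase]

lemma IsCausalBoundary.subset_iff_causalEntropy_eq (hp : ∀ ω, 0 < p ω)
    (hA : IsCausalBoundary p i A) :
    A ⊆ S ↔ causalEntropy p i S = causalEntropy p i Finset.univ := by
  have hp' : ∀ ω, 0 ≤ p ω := fun ω => (hp ω).le
  obtain ⟨hAi, hAeq⟩ := (isCausalBlanket_iff_causalEntropy_eq hp').1 hA.1
  constructor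
  · intro hAS
    exact ((antitone_causalEntropy hp' i hAS).trans_eq hAeq).antisymm
      (antitone_causalEntropy hp' i (Finset.subset_univ S))
  · intro hSeq
    have hinter : IsCausalBlanket p i (A ∩ S) := (isCausalBlanket_iff_causalEntropy_eq hp').2
      ⟨Finset.inter_subset_left.trans hAi,
        causalEntropy_inter_eq hp (Finset.subset_univ A) (Finset.subset_univ S) hAeq hSeq⟩
    exact Finset.inter_eq_left.1
      (Finset.eq_of_subset_of_card_le Finset.inter_subset_left (hA.2 _ hinter))

theorem stmt_9_general {B W : Finset (Fin m)} (hp : ∀ ω, 0 < p ω) (hA : IsCausalBoundary p i A)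
    (hAB : A ⊆ B) :
    di p W i B = 0 ∧
      di p W i ∅ ≤ di p B i ∅ ∧
      (di p W i ∅ = di p B i ∅ ↔ A ⊆ W) := by
  have hp' : ∀ ω, 0 ≤ p ω := fun ω => (hp ω).le
  have hB : causalEntropy p i B = causalEntropy p i Finset.univ :=
    (hA.subset_iff_causalEntropy_eq hp).1 hAB
  have hWB : causalEntropy p i (W ∪ B) = causalEntropy p i Finset.univ :=
    (hA.subset_iff_causalEntropy_eq hp).1 (hAB.trans Finset.subset_union_right)
  simp only [di_eq_causalEntropy_sub hp', Finset.union_empty, hB, hWB]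
  refine ⟨sub_self _, sub_le_sub_left (antitone_causalEntropy hp' i (Finset.subset_univ W)) _, ?_⟩
  rw [sub_right_inj, hA.subset_iff_causalEntropy_eq hp]

end CausalEntropy

/-- causal Markov blankets and a causal data-processing inequality.
Under Assumption 1, if `A(i)` is the causal Markov boundary of `X_i`, `A(i) ⊆ B ⊆ [m]∖{i}`
and `W ⊆ [m]∖{i}`, then (i) `I(X_W → X_i ‖ X_B) = 0` (the causal Markov chain
`X_W → X_B → X_i`), (ii) `I(X_W → X_i) ≤ I(X_B → X_i)`, and (iii) equality holds in (ii)
iff `A(i) ⊆ W`. -/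
theorem stmt_9 {m n : ℕ} (hm : 2 ≤ m) (hn : 1 ≤ n)
    {𝒳 : Type} [Fintype 𝒳] [DecidableEq 𝒳] [Nonempty 𝒳]
    (p : Traj m n 𝒳 → ℝ) (hp : Assumption1 p)
    (i : Fin m) (A B W : Finset (Fin m))
    (hA : IsCausalBoundary p i A)
    (hB : B ⊆ Finset.univ.erase i) (hAB : A ⊆ B)
    (hW : W ⊆ Finset.univ.erase i) :
    di p W i B = 0 ∧
      di p W i ∅ ≤ di p B i ∅ ∧
      (di p W i ∅ = di p B i ∅ ↔ A ⊆ W) :=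
  stmt_9_general hp.1 hA hAB
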